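/- Let δ ∈ (0,1], let g : (0,δ] → [0,∞) be integrable, let p > 1 and 1 ≤ q ≤ p. Then ∫₀^δ ((1/t)∫₀^t g(u) du)^p dt ≤ (p/(p−1))^q ∫₀^δ ((1/t)∫₀^t g(u) du)^{p−q} g(t)^q dt, where all integrals of nonnegative functions are taken with values in [0,∞]. -/

import Mathlib

/-! Write `F(t) = ∫₀^t g` and `A(t) = F(t) / t`.

For bounded `g` the function `F^p` is Lipschitz on `[0, δ]`, so `F(t)^p = p ∫₀^t F^(p-1) g`
(`hardyPrim_rpow`). Dividing by `t^p`, integrating over `(0, δ]` and applying Tonelli's theorem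
together with `∫_s^∞ t^(-p) dt = s^(1-p) / (p-1)` gives the case `q = 1`,
`∫ A^p ≤ p/(p-1) ∫ A^(p-1) g` (`hardy_one`).

For general `q`, factor `A^(p-1) g = (A^p)^(1-1/q) (A^(p-q) g^q)^(1/q)` and apply Hölder's
inequality. Since `∫ A^p` is finite for bounded `g`, the factor `(∫ A^p)^(1-1/q)` can be cancelled
(`hardy_bounded`).

Finally, an arbitrary `g` is the increasing limit of the truncations `min g n`. The left-hand side
passes to the limit by monotone convergence, and as `p - q ≥ 0` the right-hand side for `min g n`
is at most the one for `g`.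
-/

open MeasureTheory Set
open scoped ENNReal NNReal

/-- The average `(1/t) ∫₀^t g(u) du` of a nonnegative function `g` over `(0, t]`,
taken with values in `[0, ∞]`. -/
noncomputable def hardyAvg (g : ℝ → ℝ≥0) (t : ℝ) : ℝ≥0∞ :=
  (ENNReal.ofReal t)⁻¹ * ∫⁻ u in Set.Ioc (0 : ℝ) t, (g u : ℝ≥0∞)

/-- The primitive `∫₀^t f` as a function with values in `[0, ∞]`. -/
noncomputable def hardyPrim (f : ℝ → ℝ≥0) (t : ℝ) : ℝ≥0∞ :=
  ∫⁻ u in Set.Ioc (0 : ℝ) t, (f u : ℝ≥0∞)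

lemma hardyAvg_eq (f : ℝ → ℝ≥0) (t : ℝ) :
    hardyAvg f t = (ENNReal.ofReal t)⁻¹ * hardyPrim f t := rfl

lemma measurable_hardyPrim (f : ℝ → ℝ≥0) : Measurable (hardyPrim f) :=
  Monotone.measurable fun _ _ hst => lintegral_mono_set (Set.Ioc_subset_Ioc_right hst)

lemma measurable_hardyAvg (f : ℝ → ℝ≥0) : Measurable (hardyAvg f) :=
  (ENNReal.measurable_ofReal.inv).mul (measurable_hardyPrim f)

lemma hardyAvg_le {f : ℝ → ℝ≥0} {M : ℝ≥0} (hM : ∀ x, f x ≤ M) (t : ℝ) :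
    hardyAvg f t ≤ M := by
  have h : hardyPrim f t ≤ M * ENNReal.ofReal t := by
    calc hardyPrim f t ≤ ∫⁻ _ in Set.Ioc (0 : ℝ) t, (M : ℝ≥0∞) :=
          lintegral_mono fun x => ENNReal.coe_le_coe.2 (hM x)
      _ = M * ENNReal.ofReal t := by simp
  rw [hardyAvg_eq, mul_comm, ← div_eq_mul_inv]
  exact ENNReal.div_le_of_le_mul h

lemma hardyAvg_mono {f g : ℝ → ℝ≥0} (h : ∀ x, f x ≤ g x) (t : ℝ) :
    hardyAvg f t ≤ hardyAvg g t := by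
  unfold hardyAvg
  gcongr with x
  exact h x

/-- The chain rule `(F^p)' = p F^(p-1) f` for the primitive `F` of a bounded `f`, integrated over
`(0, t]`. It holds because `F^p` is Lipschitz, hence absolutely continuous, on `[0, t]`. -/
lemma hardyPrim_rpow {f : ℝ → ℝ≥0} (hf : Measurable f) {M : ℝ≥0} (hM : ∀ x, f x ≤ M)
    {p : ℝ} (hp : 1 < p) {t : ℝ} (ht : 0 ≤ t) :
    hardyPrim f t ^ p
      = ENNReal.ofReal p * ∫⁻ s in Set.Ioc (0 : ℝ) t, hardyPrim f s ^ (p - 1) * f s := by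
  have hfm : Measurable fun x => (f x : ℝ) := hf.coe_nnreal_real
  have hli : LocallyIntegrable (fun x => (f x : ℝ)) volume := by
    refine (locallyIntegrable_const (M : ℝ)).mono hfm.aestronglyMeasurable ?_
    filter_upwards with x
    simpa using hM x
  have hii : ∀ a b, IntervalIntegrable (fun x => (f x : ℝ)) volume a b := fun a b =>
    (hli.integrableOn_isCompact isCompact_uIcc).intervalIntegrable
  set G : ℝ → ℝ := fun s => ∫ x in (0 : ℝ)..s, (f x : ℝ) with hG
  have hGH : ∀ s, 0 ≤ s → ENNReal.ofReal (G s) = hardyPrim f s := by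
    intro s hs
    have h1 : IntegrableOn (fun x => (f x : ℝ)) (Set.Ioc 0 s) :=
      (intervalIntegrable_iff_integrableOn_Ioc_of_le hs).1 (hii 0 s)
    rw [hG]
    simp only
    rw [intervalIntegral.integral_of_le hs,
      ofReal_integral_eq_lintegral_ofReal h1 (by filter_upwards with x; positivity)]
    simp [hardyPrim]
  have hG0 : ∀ s, 0 ≤ s → 0 ≤ G s := fun s hs =>
    intervalIntegral.integral_nonneg hs fun x _ => (f x).2
  have hGlip : LipschitzWith M G := by
    refine LipschitzWith.of_dist_le_mul fun x y => ?_
    rw [Real.dist_eq, Real.dist_eq, hG]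
    simp only
    rw [intervalIntegral.integral_interval_sub_left (hii 0 x) (hii 0 y), ← Real.norm_eq_abs]
    exact intervalIntegral.norm_integral_le_of_norm_le_const fun z _ => by simpa using hM z
  have hmaps : Set.MapsTo G (Set.uIcc 0 t) (Set.Icc 0 (M * t)) := by
    intro s hs
    rw [Set.uIcc_of_le ht] at hs
    refine ⟨hG0 s hs.1, ?_⟩
    have := hGlip.dist_le_mul s 0
    have h00 : G 0 = 0 := by simp [hG]
    rw [Real.dist_eq, Real.dist_eq, h00, sub_zero, sub_zero, abs_of_nonneg hs.1] at this
    exact (le_abs_self _).trans (this.trans (by gcongr; exact hs.2))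
  have hC1 : ContDiff ℝ 1 fun x : ℝ => x ^ p :=
    Real.contDiff_rpow_const_of_le (by simpa using hp.le)
  obtain ⟨K, hK⟩ := hC1.contDiffOn.exists_lipschitzOnWith (s := Set.Icc 0 (M * t)) one_ne_zero
    (convex_Icc _ _) isCompact_Icc
  have hAC : AbsolutelyContinuousOnInterval (fun s => G s ^ p) 0 t :=
    (hK.comp hGlip.lipschitzOnWith hmaps).absolutelyContinuousOnInterval
  have hftc := hAC.integral_deriv_eq_sub
  have hderiv : ∀ᵐ s, deriv (fun s => G s ^ p) s = p * (G s ^ (p - 1) * f s) := by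
    filter_upwards [LocallyIntegrable.ae_hasDerivAt_integral hli] with s hs
    rw [((hs 0).rpow_const (Or.inr hp.le)).deriv]
    ring
  have hint : IntegrableOn (fun s => p * (G s ^ (p - 1) * f s)) (Set.Ioc 0 t) :=
    ((intervalIntegrable_iff_integrableOn_Ioc_of_le ht).1 hAC.intervalIntegrable_deriv).congr
      (ae_restrict_of_ae hderiv)
  have h0 : G 0 ^ p = 0 := by
    simp [hG, Real.zero_rpow (by linarith : p ≠ 0)]
  rw [h0, sub_zero, intervalIntegral.integral_of_le ht,
    integral_congr_ae (ae_restrict_of_ae hderiv)] at hftc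
  rw [← hGH t ht, ENNReal.ofReal_rpow_of_nonneg (hG0 t ht) (by linarith), ← hftc,
    ofReal_integral_eq_lintegral_ofReal hint, ← lintegral_const_mul]
  · refine setLIntegral_congr_fun measurableSet_Ioc fun s hs => ?_
    have := hG0 s hs.1.le
    rw [ENNReal.ofReal_mul (by linarith), ENNReal.ofReal_mul (by positivity),
      ← ENNReal.ofReal_rpow_of_nonneg this (by linarith), hGH s hs.1.le, ENNReal.ofReal_coe_nnreal]
  · exact ((measurable_hardyPrim f).pow_const _).mul hf.coe_nnreal_ennreal
  · filter_upwards [ae_restrict_mem measurableSet_Ioc] with s hs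
    have := hG0 s hs.1.le
    simp only [Pi.zero_apply]
    positivity

lemma lintegral_Ioi_rpow_neg {p : ℝ} (hp : 1 < p) {s : ℝ} (hs : 0 < s) :
    ∫⁻ t in Set.Ioi s, (ENNReal.ofReal t)⁻¹ ^ p
      = ENNReal.ofReal (1 / (p - 1)) * (ENNReal.ofReal s)⁻¹ ^ (p - 1) := by
  have h1 : ∀ x : ℝ, 0 < x → ∀ r : ℝ, (ENNReal.ofReal x)⁻¹ ^ r = ENNReal.ofReal (x ^ (-r)) := by
    intro x hx r
    rw [ENNReal.inv_rpow, ← ENNReal.rpow_neg, ENNReal.ofReal_rpow_of_pos hx]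
  rw [setLIntegral_congr_fun measurableSet_Ioi
    (fun t (ht : s < t) => h1 t (hs.trans ht) p),
    ← ofReal_integral_eq_lintegral_ofReal (integrableOn_Ioi_rpow_of_lt (by linarith) hs),
    integral_Ioi_rpow_of_lt (by linarith) hs, h1 s hs, ← ENNReal.ofReal_mul]
  · congr 1
    rw [show -(p - 1) = -p + 1 by ring]
    have : p - 1 ≠ 0 := by linarith
    have : -p + 1 ≠ 0 := by intro h; apply this; linarith
    field_simp
    ring
  · have : 0 < p - 1 := by linarith
    positivity
  · filter_upwards [ae_restrict_mem measurableSet_Ioi] with t ht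
    have : 0 < t := hs.trans ht
    simp only [Pi.zero_apply]
    positivity

/-- The case `q = 1` for bounded functions: write `F(t)^p` as an integral over `(0, t]` by the
chain rule, exchange the order of integration, and integrate `t^(-p)` over `(s, ∞)`. -/
lemma hardy_one {f : ℝ → ℝ≥0} (hf : Measurable f) {M : ℝ≥0} (hM : ∀ x, f x ≤ M)
    {p : ℝ} (hp : 1 < p) (δ : ℝ) :
    ∫⁻ t in Set.Ioc (0 : ℝ) δ, hardyAvg f t ^ p
      ≤ ENNReal.ofReal (p / (p - 1)) * ∫⁻ t in Set.Ioc (0 : ℝ) δ, hardyAvg f t ^ (p - 1) * f t := by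
  have hp0 : 0 < p - 1 := by linarith
  set h : ℝ → ℝ≥0∞ := fun s => hardyPrim f s ^ (p - 1) * f s with hh
  have hhm : Measurable h :=
    ((measurable_hardyPrim f).pow_const _).mul hf.coe_nnreal_ennreal
  set w : ℝ → ℝ≥0∞ := fun t => (ENNReal.ofReal t)⁻¹ ^ p with hw
  have hwm : Measurable w := (ENNReal.measurable_ofReal.inv).pow_const _
  let k : ℝ × ℝ → ℝ≥0∞ := {z : ℝ × ℝ | z.2 ≤ z.1}.indicator fun z => w z.1 * h z.2
  have hkm : Measurable k :=
    ((hwm.comp measurable_fst).mul (hhm.comp measurable_snd)).indicator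
      (measurableSet_le measurable_snd measurable_fst)
  have hleft : ∀ t ∈ Set.Ioc (0 : ℝ) δ,
      hardyAvg f t ^ p = ENNReal.ofReal p * ∫⁻ s in Set.Ioc (0 : ℝ) δ, k (t, s) := by
    intro t ht
    rw [hardyAvg_eq, ENNReal.mul_rpow_of_nonneg _ _ (by linarith), hardyPrim_rpow hf hM hp ht.1.le,
      mul_left_comm, ← lintegral_const_mul _ hhm]
    congr 1
    have : ∀ s, k (t, s) = (Set.Iic t).indicator (fun s => w t * h s) s := fun s => rfl
    simp_rw [this]
    rw [setLIntegral_indicator measurableSet_Iic, Set.inter_comm, Set.Ioc_inter_Iic,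
      min_eq_right ht.2]
  have hright : ∀ s ∈ Set.Ioc (0 : ℝ) δ,
      ∫⁻ t in Set.Ioc (0 : ℝ) δ, k (t, s)
        ≤ ENNReal.ofReal (1 / (p - 1)) * (hardyAvg f s ^ (p - 1) * f s) := by
    intro s hs
    have : ∀ t, k (t, s) = (Set.Ici s).indicator (fun t => w t * h s) t := fun t => rfl
    simp_rw [this]
    calc ∫⁻ t in Set.Ioc (0 : ℝ) δ, (Set.Ici s).indicator (fun t => w t * h s) t
        ≤ ∫⁻ t, (Set.Ici s).indicator (fun t => w t * h s) t := setLIntegral_le_lintegral _ _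
      _ = ∫⁻ t in Set.Ioi s, w t * h s := by
          rw [lintegral_indicator measurableSet_Ici, setLIntegral_congr Ioi_ae_eq_Ici.symm]
      _ = ENNReal.ofReal (1 / (p - 1)) * (ENNReal.ofReal s)⁻¹ ^ (p - 1) * h s := by
          rw [lintegral_mul_const _ hwm, lintegral_Ioi_rpow_neg hp hs.1]
      _ = _ := by
          rw [hardyAvg_eq, ENNReal.mul_rpow_of_nonneg _ _ hp0.le, hh]
          ring
  calc ∫⁻ t in Set.Ioc (0 : ℝ) δ, hardyAvg f t ^ p
      = ∫⁻ t in Set.Ioc (0 : ℝ) δ, ENNReal.ofReal p * ∫⁻ s in Set.Ioc (0 : ℝ) δ, k (t, s) :=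
        setLIntegral_congr_fun measurableSet_Ioc hleft
    _ = ENNReal.ofReal p * ∫⁻ s in Set.Ioc (0 : ℝ) δ, ∫⁻ t in Set.Ioc (0 : ℝ) δ, k (t, s) := by
        rw [lintegral_const_mul _ hkm.lintegral_prod_right',
          lintegral_lintegral_swap (f := fun t s => k (t, s)) hkm.aemeasurable]
    _ ≤ ENNReal.ofReal p * ∫⁻ s in Set.Ioc (0 : ℝ) δ,
          ENNReal.ofReal (1 / (p - 1)) * (hardyAvg f s ^ (p - 1) * f s) := by
        gcongr ENNReal.ofReal p * ?_
        exact setLIntegral_mono' measurableSet_Ioc hright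
    _ = _ := by
        have hm : Measurable fun s => hardyAvg f s ^ (p - 1) * (f s : ℝ≥0∞) :=
          ((measurable_hardyAvg f).pow_const _).mul hf.coe_nnreal_ennreal
        rw [lintegral_const_mul _ hm, ← mul_assoc, ← ENNReal.ofReal_mul (by linarith), mul_one_div]

/-- The inequality for bounded functions, from the case `q = 1` and Hölder's inequality.
Boundedness makes the left-hand side finite, so that a power of it can be cancelled. -/
lemma hardy_bounded {f : ℝ → ℝ≥0} (hf : Measurable f) {M : ℝ≥0} (hM : ∀ x, f x ≤ M)
    {p q : ℝ} (hp : 1 < p) (hq1 : 1 ≤ q) (hqp : q ≤ p) (δ : ℝ) :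
    ∫⁻ t in Set.Ioc (0 : ℝ) δ, hardyAvg f t ^ p
      ≤ ENNReal.ofReal (p / (p - 1)) ^ q
        * ∫⁻ t in Set.Ioc (0 : ℝ) δ, hardyAvg f t ^ (p - q) * (f t : ℝ≥0∞) ^ q := by
  have hq0 : 0 < q := by linarith
  have hfm := hf.coe_nnreal_ennreal
  have hAm := measurable_hardyAvg f
  set C := ENNReal.ofReal (p / (p - 1))
  set I := ∫⁻ t in Set.Ioc (0 : ℝ) δ, hardyAvg f t ^ p with hI
  set R := ∫⁻ t in Set.Ioc (0 : ℝ) δ, hardyAvg f t ^ (p - q) * (f t : ℝ≥0∞) ^ q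
  have hItop : I ≠ ⊤ := by
    refine ne_top_of_le_ne_top (b := ∫⁻ _ in Set.Ioc (0 : ℝ) δ, (M : ℝ≥0∞) ^ p) ?_ ?_
    · rw [setLIntegral_const, Real.volume_Ioc]
      exact ENNReal.mul_ne_top (ENNReal.rpow_ne_top_of_nonneg (by linarith) ENNReal.coe_ne_top)
        ENNReal.ofReal_ne_top
    · refine setLIntegral_mono' measurableSet_Ioc fun t _ => ?_
      exact ENNReal.rpow_le_rpow (hardyAvg_le hM t) (by linarith)
  have hqi : 1 / q ≤ 1 := by rw [div_le_one hq0]; exact hq1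
  have hpt : ∀ t, hardyAvg f t ^ (p - 1) * f t
      = (hardyAvg f t ^ p) ^ (1 - 1 / q)
        * (hardyAvg f t ^ (p - q) * (f t : ℝ≥0∞) ^ q) ^ (1 / q) := by
    intro t
    rw [ENNReal.mul_rpow_of_nonneg _ _ (by positivity), ← ENNReal.rpow_mul, ← ENNReal.rpow_mul,
      ← ENNReal.rpow_mul, mul_one_div_cancel hq0.ne', ENNReal.rpow_one, ← mul_assoc,
      ← ENNReal.rpow_add_of_nonneg]
    · congr 2
      field_simp
      ring
    · exact mul_nonneg (by linarith) (by linarith)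
    · exact mul_nonneg (by linarith) (by positivity)
  have hmain : I ≤ C * (I ^ (1 - 1 / q) * R ^ (1 / q)) := by
    refine (hardy_one hf hM hp δ).trans ?_
    simp_rw [hpt]
    gcongr C * ?_
    exact ENNReal.lintegral_mul_norm_pow_le (hAm.pow_const _).aemeasurable
      ((hAm.pow_const _).mul (hfm.pow_const _)).aemeasurable
      (sub_nonneg.2 hqi) (by positivity) (sub_add_cancel _ _)
  rcases eq_or_ne I 0 with h0 | h0
  · rw [h0]; exact zero_le
  have hJ0 : I ^ (1 - 1 / q) ≠ 0 := by simp [h0, hItop]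
  have hJtop : I ^ (1 - 1 / q) ≠ ⊤ := ENNReal.rpow_ne_top_of_nonneg (by linarith) hItop
  have hroot : I ^ (1 / q) ≤ C * R ^ (1 / q) := by
    rw [← ENNReal.mul_le_mul_iff_right hJ0 hJtop, ← ENNReal.rpow_add _ _ h0 hItop]
    simpa [mul_left_comm] using hmain
  have := ENNReal.rpow_le_rpow hroot hq0.le
  rwa [ENNReal.mul_rpow_of_nonneg _ _ hq0.le, ← ENNReal.rpow_mul, ← ENNReal.rpow_mul,
    one_div_mul_cancel hq0.ne', ENNReal.rpow_one, ENNReal.rpow_one] at this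

/-- The rescaled Hardy-type inequality on an arbitrary interval `(0, δ]`. -/
theorem hardy_rescaled (δ : ℝ) (hδ : δ ∈ Set.Ioc (0 : ℝ) 1)
    (g : ℝ → ℝ≥0) (hg : Measurable g)
    (hint : (∫⁻ u in Set.Ioc (0 : ℝ) δ, (g u : ℝ≥0∞)) ≠ ⊤)
    (p q : ℝ) (hp : 1 < p) (hq1 : 1 ≤ q) (hqp : q ≤ p) :
    (∫⁻ t in Set.Ioc (0 : ℝ) δ, hardyAvg g t ^ p)
    ≤ ENNReal.ofReal (p / (p - 1)) ^ q
        * ∫⁻ t in Set.Ioc (0 : ℝ) δ, hardyAvg g t ^ (p - q) * (g t : ℝ≥0∞) ^ q := by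
  let f : ℕ → ℝ → ℝ≥0 := fun n x => min (g x) n
  have hfm : ∀ n, Measurable (f n) := fun n => hg.min measurable_const
  have hfg : ∀ n x, f n x ≤ g x := fun n x => min_le_left _ _
  have hmono : ∀ x, Monotone fun n => f n x := fun x m n hmn =>
    min_le_min_left _ (by exact_mod_cast hmn)
  have hlim : ∀ x, Filter.Tendsto (fun n => (f n x : ℝ≥0∞)) Filter.atTop (nhds (g x : ℝ≥0∞)) := by
    intro x
    obtain ⟨N, hN⟩ := exists_nat_ge (g x)
    refine tendsto_const_nhds.congr' ?_
    filter_upwards [Filter.eventually_ge_atTop N] with n hn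
    have : g x ≤ n := hN.trans (by exact_mod_cast hn)
    simp [f, this]
  have hA : ∀ t ∈ Set.Ioc (0 : ℝ) δ,
      Filter.Tendsto (fun n => hardyAvg (f n) t ^ p) Filter.atTop (nhds (hardyAvg g t ^ p)) := by
    intro t ht
    refine (ENNReal.continuous_rpow_const.tendsto _).comp ?_
    refine ENNReal.Tendsto.const_mul ?_ (Or.inr (by simpa using ht.1))
    exact lintegral_tendsto_of_tendsto_of_monotone
      (fun n => (hfm n).coe_nnreal_ennreal.aemeasurable)
      (Filter.Eventually.of_forall fun x m n hmn => ENNReal.coe_le_coe.2 (hmono x hmn))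
      (Filter.Eventually.of_forall hlim)
  have hL := lintegral_tendsto_of_tendsto_of_monotone (μ := volume.restrict (Set.Ioc (0 : ℝ) δ))
    (fun n => ((measurable_hardyAvg (f n)).pow_const p).aemeasurable)
    (Filter.Eventually.of_forall fun t m n hmn =>
      ENNReal.rpow_le_rpow (hardyAvg_mono (fun x => hmono x hmn) t) (by linarith))
    ((ae_restrict_mem measurableSet_Ioc).mono hA)
  refine le_of_tendsto' hL fun n => ?_
  refine (hardy_bounded (hfm n) (fun x => min_le_right _ _) hp hq1 hqp δ).trans ?_
  gcongr ENNReal.ofReal (p / (p - 1)) ^ q * ?_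
  refine lintegral_mono fun t => ?_
  exact mul_le_mul' (ENNReal.rpow_le_rpow (hardyAvg_mono (hfg n) t) (by linarith))
    (ENNReal.rpow_le_rpow (by exact_mod_cast hfg n t) (by linarith))
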